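/- For every ordinal α < 1^∞, the set Pred₂(α) = {β : β <₂ α} of strict ≤₂-predecessors of α is finite and linearly ordered by <₂, i.e., it forms a finite <₂-chain β₁ <₂ β₂ <₂ ⋯ <₂ β_r <₂ α. -/

import Mathlib

open FirstOrder

/-- The relation symbols of the language of `ℛ₂`: three binary relations. -/
inductive ordRel : ℕ → Type
  | le : ordRel 2
  | le1 : ordRel 2
  | le2 : ordRel 2

/-- The first-order language with three binary relation symbols `≤`, `≤₁`, `≤₂`. -/
def ordLang : FirstOrder.Language := ⟨fun _ => Empty, ordRel⟩

/-- The `ordLang`-structure on the set of ordinals below `β`, interpreting the three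
relation symbols by `≤` and the given relations `le1`, `le2`. -/
def segStr (le1 le2 : Ordinal → Ordinal → Prop) (β : Ordinal) :
    ordLang.Structure {x : Ordinal // x < β} where
  funMap := fun f => Empty.elim f
  RelMap
    | .le => fun v => (v 0).1 ≤ (v 1).1
    | .le1 => fun v => le1 (v 0).1 (v 1).1
    | .le2 => fun v => le2 (v 0).1 (v 1).1

/-- Σ₁-formulas: a block of existential quantifiers applied to a quantifier-free formula. -/
inductive IsSigma1 {L : FirstOrder.Language} {α : Type} :
    {n : ℕ} → L.BoundedFormula α n → Prop
  | of_isQF {n} {φ : L.BoundedFormula α n} (h : φ.IsQF) : IsSigma1 φ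
  | ex {n} {φ : L.BoundedFormula α (n + 1)} (h : IsSigma1 φ) : IsSigma1 φ.ex

/-- Π₁-formulas: a block of universal quantifiers applied to a quantifier-free formula. -/
inductive IsPi1 {L : FirstOrder.Language} {α : Type} :
    {n : ℕ} → L.BoundedFormula α n → Prop
  | of_isQF {n} {φ : L.BoundedFormula α n} (h : φ.IsQF) : IsPi1 φ
  | all {n} {φ : L.BoundedFormula α (n + 1)} (h : IsPi1 φ) : IsPi1 φ.all

/-- Σ₂-formulas: a block of existential quantifiers applied to a Π₁-formula. -/
inductive IsSigma2 {L : FirstOrder.Language} {α : Type} :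
    {n : ℕ} → L.BoundedFormula α n → Prop
  | of_isPi1 {n} {φ : L.BoundedFormula α n} (h : IsPi1 φ) : IsSigma2 φ
  | ex {n} {φ : L.BoundedFormula α (n + 1)} (h : IsSigma2 φ) : IsSigma2 φ.ex

/-- Realization of a formula with `k` parameters in the segment structure below `β`. -/
def RealizeIn (le1 le2 : Ordinal → Ordinal → Prop) (β : Ordinal) {k : ℕ}
    (φ : ordLang.Formula (Fin k)) (v : Fin k → {x : Ordinal // x < β}) : Prop :=
  letI := segStr le1 le2 β
  φ.Realize v

/-- `a ≤ b` and the segment below `a` is an elementary substructure of the segment below `b`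
with respect to the class `C` of formulas (with parameters from below `a`). -/
def ElemSub (C : ∀ k : ℕ, ordLang.Formula (Fin k) → Prop)
    (le1 le2 : Ordinal → Ordinal → Prop) (a b : Ordinal) : Prop :=
  ∃ hab : a ≤ b,
    ∀ (k : ℕ) (φ : ordLang.Formula (Fin k)), C k φ →
      ∀ v : Fin k → {x : Ordinal // x < a},
        RealizeIn le1 le2 a φ v ↔
          RealizeIn le1 le2 b φ (fun j => ⟨(v j).1, lt_of_lt_of_le (v j).2 hab⟩)

/-- The pair of relations `le1`, `le2` satisfies the simultaneous recursive definition of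
`≤₁` and `≤₂` on the ordinals: `α ≤ᵢ β` iff `α ≤ β` and the segment below `α` is a
Σᵢ-elementary substructure of the segment below `β`. -/
def IsR2Pair (le1 le2 : Ordinal → Ordinal → Prop) : Prop :=
  (∀ a b, le1 a b ↔ ElemSub (fun _ φ => IsSigma1 φ) le1 le2 a b) ∧
  (∀ a b, le2 a b ↔ ElemSub (fun _ φ => IsSigma2 φ) le1 le2 a b)

/-- The strict part of `≤₁`. -/
def Lt1 (le1 : Ordinal → Ordinal → Prop) (a b : Ordinal) : Prop := le1 a b ∧ a ≠ b

/-- The strict part of `≤₂`. -/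
def Lt2 (le2 : Ordinal → Ordinal → Prop) (a b : Ordinal) : Prop := le2 a b ∧ a ≠ b

/-- `1^∞`: the least ordinal `ν` such that below `ν` there are `<₂`-chains of every finite
length. -/
noncomputable def OneInfty (le2 : Ordinal → Ordinal → Prop) : Ordinal :=
  sInf {ν : Ordinal | ∀ n : ℕ, ∃ β : Fin n → Ordinal,
    (∀ i, β i < ν) ∧
    ∀ (i : ℕ) (hi : i + 1 < n), Lt2 le2 (β ⟨i, Nat.lt_of_succ_lt hi⟩) (β ⟨i + 1, hi⟩)}

/-- A respecting forest of order 2: a finite structure with a linear order `≤₀` and partial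
orders `≤₁`, `≤₂` which are forests, with `≤₂ ⊆ ≤₁ ⊆ ≤₀`, and `≤ᵢ₊₁` respecting `≤ᵢ`. -/
structure RForest where
  P : Type
  [fintypeP : Fintype P]
  le0 : P → P → Prop
  le1 : P → P → Prop
  le2 : P → P → Prop
  le0_refl : ∀ p, le0 p p
  le0_trans : ∀ p q r, le0 p q → le0 q r → le0 p r
  le0_antisymm : ∀ p q, le0 p q → le0 q p → p = q
  le0_total : ∀ p q, le0 p q ∨ le0 q p
  le1_refl : ∀ p, le1 p p
  le1_trans : ∀ p q r, le1 p q → le1 q r → le1 p r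
  le1_antisymm : ∀ p q, le1 p q → le1 q p → p = q
  le2_refl : ∀ p, le2 p p
  le2_trans : ∀ p q r, le2 p q → le2 q r → le2 p r
  le2_antisymm : ∀ p q, le2 p q → le2 q p → p = q
  le2_sub_le1 : ∀ p q, le2 p q → le1 p q
  le1_sub_le0 : ∀ p q, le1 p q → le0 p q
  forest1 : ∀ p q r, le1 q p → le1 r p → le1 q r ∨ le1 r q
  forest2 : ∀ p q r, le2 q p → le2 r p → le2 q r ∨ le2 r q
  respects1 : ∀ p q r, le0 p q → le0 q r → le1 p r → le1 p q
  respects2 : ∀ p q r, le1 p q → le1 q r → le2 p r → le2 p q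

attribute [instance] RForest.fintypeP

/-- The finite set `X` of ordinals, with the relations induced from `ℛ₂`, is isomorphic to the
respecting forest `F`. -/
def Realizes (le1 le2 : Ordinal → Ordinal → Prop) (F : RForest) (X : Finset Ordinal) : Prop :=
  ∃ e : F.P ≃ {x // x ∈ X}, ∀ p q : F.P,
    (F.le0 p q ↔ ((e p : Ordinal) ≤ (e q : Ordinal))) ∧
    (F.le1 p q ↔ le1 (e p : Ordinal) (e q : Ordinal)) ∧
    (F.le2 p q ↔ le2 (e p : Ordinal) (e q : Ordinal))

/-- Pointwise comparison of two finite sets of ordinals via their increasing enumerations. -/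
def pwLE (X Y : Finset Ordinal) : Prop :=
  ∃ h : X.card = Y.card, ∀ i : Fin X.card,
    ((X.orderIsoOfFin rfl i : {x // x ∈ X}) : Ordinal) ≤
      ((Y.orderIsoOfFin h.symm i : {x // x ∈ Y}) : Ordinal)

/-- `X` is the isominimal realization of the respecting forest `F` in `ℛ₂`: it is isomorphic
to `F` and pointwise minimal among all finite substructures of `ℛ₂` isomorphic to `F`. -/
def IsIsominimalRealization (le1 le2 : Ordinal → Ordinal → Prop) (F : RForest)
    (X : Finset Ordinal) : Prop :=
  Realizes le1 le2 F X ∧ ∀ Y : Finset Ordinal, Realizes le1 le2 F Y → pwLE X Y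

/-- A covering of the respecting forest `F` into `ℛ₂`. -/
def IsCovering (le1 le2 : Ordinal → Ordinal → Prop) (F : RForest)
    (c : F.P → Ordinal) : Prop :=
  (∀ p q, F.le0 p q ↔ c p ≤ c q) ∧
  (∀ p q, F.le1 p q → le1 (c p) (c q)) ∧
  (∀ p q, F.le2 p q → le2 (c p) (c q))


/-- A covering of the respecting forest `F` into the respecting forest `G`. -/
def ForestCovering (F G : RForest) (f : F.P → G.P) : Prop :=
  (∀ p q, F.le0 p q ↔ G.le0 (f p) (f q)) ∧
  (∀ p q, F.le1 p q → G.le1 (f p) (f q)) ∧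
  (∀ p q, F.le2 p q → G.le2 (f p) (f q))

/-!
If `a ≤ b` are both elementary in `c`, then `a` is elementary in `b`: a formula with parameters
below `a` has the same truth value in all three segments. So any two predecessors of `α` are
comparable, and infinitely many of them would yield chains of every finite length below `α`,
contradicting `α < 1^∞`.
-/

theorem exists_orderEmbedding_fin_of_infinite {ι : Type*} [LinearOrder ι] {s : Set ι}
    (hs : s.Infinite) (n : ℕ) : ∃ f : Fin n ↪o ι, ∀ i, f i ∈ s := by
  obtain ⟨t, hts, ht⟩ := hs.exists_subset_card_eq n
  exact ⟨t.orderEmbOfFin ht, fun i ↦ hts (t.orderEmbOfFin_mem ht i)⟩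

universe u

section

variable {C : ∀ k : ℕ, ordLang.Formula (Fin k) → Prop}
  {le1 le2 : Ordinal.{u} → Ordinal.{u} → Prop} {a b c : Ordinal.{u}}

theorem ElemSub.le (hab : ElemSub C le1 le2 a b) : a ≤ b :=
  hab.1

theorem ElemSub.of_common_extension (hac : ElemSub C le1 le2 a c) (hbc : ElemSub C le1 le2 b c)
    (hab : a ≤ b) : ElemSub C le1 le2 a b := by
  obtain ⟨_, realize_ac⟩ := hac
  obtain ⟨_, realize_bc⟩ := hbc
  refine ⟨hab, fun k φ hφ v ↦ (realize_ac k φ hφ v).trans ?_⟩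
  exact (realize_bc k φ hφ fun j ↦ ⟨v j, (v j).2.trans_le hab⟩).symm

theorem lt_of_lt2_elemSub (hab : Lt2 (ElemSub C le1 le2) a b) : a < b :=
  hab.1.le.lt_of_ne hab.2

theorem lt2_elemSub_of_lt (hac : Lt2 (ElemSub C le1 le2) a c)
    (hbc : Lt2 (ElemSub C le1 le2) b c) (hab : a < b) : Lt2 (ElemSub C le1 le2) a b :=
  ⟨hac.1.of_common_extension hbc.1 hab.le, hab.ne⟩

theorem lt2_elemSub_or_lt2_elemSub (hac : Lt2 (ElemSub C le1 le2) a c)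
    (hbc : Lt2 (ElemSub C le1 le2) b c) (hne : a ≠ b) :
    Lt2 (ElemSub C le1 le2) a b ∨ Lt2 (ElemSub C le1 le2) b a :=
  hne.lt_or_gt.imp (lt2_elemSub_of_lt hac hbc) (lt2_elemSub_of_lt hbc hac)

theorem oneInfty_elemSub_le_of_infinite
    (ha : {b | Lt2 (ElemSub C le1 le2) b a}.Infinite) : OneInfty (ElemSub C le1 le2) ≤ a := by
  refine csInf_le' fun n ↦ ?_
  obtain ⟨f, hf⟩ := exists_orderEmbedding_fin_of_infinite ha n
  exact ⟨f, fun i ↦ lt_of_lt2_elemSub (hf i), fun i _ ↦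
    lt2_elemSub_of_lt (hf _) (hf _) (f.strictMono (Fin.mk_lt_mk.2 i.lt_succ_self))⟩

end

theorem stmt12_general (C : ∀ k : ℕ, ordLang.Formula (Fin k) → Prop)
    (le1 le2 : Ordinal.{u} → Ordinal.{u} → Prop) (α : Ordinal.{u})
    (hα : α < OneInfty (ElemSub C le1 le2)) :
    {β | Lt2 (ElemSub C le1 le2) β α}.Finite ∧
    ∀ β ∈ {β | Lt2 (ElemSub C le1 le2) β α}, ∀ γ ∈ {β | Lt2 (ElemSub C le1 le2) β α},
      β ≠ γ → Lt2 (ElemSub C le1 le2) β γ ∨ Lt2 (ElemSub C le1 le2) γ β :=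
  ⟨Set.not_infinite.1 fun hinf ↦ hα.not_ge (oneInfty_elemSub_le_of_infinite hinf),
    fun _ hβ _ hγ ↦ lt2_elemSub_or_lt2_elemSub hβ hγ⟩

theorem stmt12 (le1 le2 : Ordinal → Ordinal → Prop) (h : IsR2Pair le1 le2)
    (α : Ordinal) (hα : α < OneInfty le2) :
    {β : Ordinal | Lt2 le2 β α}.Finite ∧
    ∀ β ∈ {β : Ordinal | Lt2 le2 β α}, ∀ γ ∈ {β : Ordinal | Lt2 le2 β α},
      β ≠ γ → Lt2 le2 β γ ∨ Lt2 le2 γ β := by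
  have hle2 : ElemSub (fun _ φ ↦ IsSigma2 φ) le1 le2 = le2 :=
    funext₂ fun a b ↦ propext (h.2 a b).symm
  simpa only [hle2] using stmt12_general (fun _ φ ↦ IsSigma2 φ) le1 le2 α (by rwa [hle2])
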